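/- arXiv:2501.02489 — 4 statements merged into one kernel-verified Lean document; each statement's English description precedes it below -/
import Mathlib

section
/- Let F̂ ∈ ℝ^{n×K} satisfy F̂ᵀF̂ = n I_K, let P̂ = (1/n) F̂ F̂ᵀ, let X ∈ ℝ^{n×p}, Û = (I_n − P̂) X, y ∈ ℝⁿ, and λ > 0. Then: (i) F̂ᵀÛ = 0 (the K×p zero matrix); (ii) for all β ∈ ℝ^p and γ ∈ ℝ^K, (1/(2n))‖y − Ûβ − F̂γ‖₂² = (1/(2n))‖(I_n − P̂)y − Ûβ‖₂² + (1/(2n))‖P̂y − F̂γ‖₂²; and (iii) a pair (β̂, γ̂) is a global minimizer of (β, γ) ↦ (1/(2n))‖y − Ûβ − F̂γ‖₂² + λ‖β‖₁ if and only if γ̂ = (1/n) F̂ᵀ y and β̂ is a global minimizer of β ↦ (1/(2n))‖(I_n − P̂)y − Ûβ‖₂² + λ‖β‖₁. -/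
open Matrix BigOperators

/-!
The normalization `Fᵀ F = c I` makes `P = c⁻¹ F Fᵀ` the orthogonal projection onto the column space
of `F`, so the residual splits into the orthogonal parts `(I - P)(y - X β)` and `P y - F γ`. By
Pythagoras the joint objective is a function of `β` plus a function of `γ`, and the two can be
minimized separately. The `γ` part attains the value zero at `c⁻¹ Fᵀ y`, and only there since `F` is
injective. The penalty enters only through being a function of `β` alone.
-/

theorem forall_add_le_add_iff {α β M : Type*} [Add M] [Preorder M] [AddLeftMono M]
    [AddRightMono M] [AddLeftReflectLE M] [AddRightReflectLE M] {f : α → M} {g : β → M}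
    {a₀ : α} {b₀ : β} :
    (∀ a b, f a₀ + g b₀ ≤ f a + g b) ↔ (∀ a, f a₀ ≤ f a) ∧ ∀ b, g b₀ ≤ g b :=
  ⟨fun h => ⟨fun a => le_of_add_le_add_right (h a b₀), fun b => le_of_add_le_add_left (h a₀ b)⟩,
    fun h a b => add_le_add (h.1 a) (h.2 b)⟩

section SqNorm

variable {ι R : Type*} [Fintype ι]

/-- The squared Euclidean norm `‖v‖₂²` as a sum of squares of coordinates. The type `ι → R` carries
the supremum norm, so `‖v‖ ^ 2` would mean something else. -/
def sqNorm [Semiring R] (v : ι → R) : R :=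
  ∑ i, v i ^ 2

theorem sqNorm_eq_dotProduct_self [Semiring R] (v : ι → R) : sqNorm v = v ⬝ᵥ v :=
  Finset.sum_congr rfl fun i _ => sq (v i)

theorem sqNorm_add_of_dotProduct_eq_zero [CommSemiring R] {u v : ι → R} (huv : u ⬝ᵥ v = 0) :
    sqNorm (u + v) = sqNorm u + sqNorm v := by
  have hvu : v ⬝ᵥ u = 0 := by rw [dotProduct_comm, huv]
  simp only [sqNorm_eq_dotProduct_self, add_dotProduct, dotProduct_add, huv, hvu, add_zero,
    zero_add]

variable [Ring R] [LinearOrder R] [IsStrictOrderedRing R]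

theorem sqNorm_nonneg (v : ι → R) : 0 ≤ sqNorm v :=
  Finset.sum_nonneg fun i _ => sq_nonneg (v i)

theorem sqNorm_eq_zero {v : ι → R} : sqNorm v = 0 ↔ v = 0 := by
  rw [sqNorm_eq_dotProduct_self, dotProduct_self_eq_zero]

end SqNorm

section FactorProjection

variable {ι κ π 𝕜 : Type*} [Fintype ι] [Fintype κ] [Fintype π] [Field 𝕜]
  {F : Matrix ι κ 𝕜} {c : 𝕜}

/-- The matrix `P = c⁻¹ F Fᵀ`, which is the orthogonal projection onto the column space of `F` when
the factors are normalized by `Fᵀ F = c I` with `c ≠ 0`. -/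
def factorProjection (c : 𝕜) (F : Matrix ι κ 𝕜) : Matrix ι ι 𝕜 :=
  c⁻¹ • (F * Fᵀ)

/-- The least-squares coefficients `c⁻¹ Fᵀ y` of `y` on the columns of `F`, under the normalization
`Fᵀ F = c I` with `c ≠ 0`. -/
def factorCoeff (c : 𝕜) (F : Matrix ι κ 𝕜) (y : ι → 𝕜) : κ → 𝕜 :=
  c⁻¹ • (Fᵀ *ᵥ y)

theorem factorProjection_mulVec (c : 𝕜) (F : Matrix ι κ 𝕜) (y : ι → 𝕜) :
    factorProjection c F *ᵥ y = F *ᵥ factorCoeff c F y := by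
  rw [factorProjection, factorCoeff, smul_mulVec, mulVec_smul, mulVec_mulVec]

variable [DecidableEq κ]

theorem factorCoeff_mulVec (hc : c ≠ 0) (hF : Fᵀ * F = c • 1) (γ : κ → 𝕜) :
    factorCoeff c F (F *ᵥ γ) = γ := by
  rw [factorCoeff, mulVec_mulVec, hF, smul_mulVec, one_mulVec, inv_smul_smul₀ hc]

theorem mulVec_injective_of_transpose_mul_self (hc : c ≠ 0) (hF : Fᵀ * F = c • 1) :
    Function.Injective (F *ᵥ ·) :=
  Function.LeftInverse.injective (g := factorCoeff c F) (factorCoeff_mulVec hc hF)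

theorem forall_mul_sqNorm_factorProjection_sub_le_iff [LinearOrder 𝕜] [IsStrictOrderedRing 𝕜]
    (hc : c ≠ 0) (hF : Fᵀ * F = c • 1) {w : 𝕜} (hw : 0 < w) (y : ι → 𝕜) (γhat : κ → 𝕜) :
    (∀ γ, w * sqNorm (factorProjection c F *ᵥ y - F *ᵥ γhat) ≤
        w * sqNorm (factorProjection c F *ᵥ y - F *ᵥ γ)) ↔
      γhat = factorCoeff c F y := by
  simp only [mul_le_mul_iff_right₀ hw, factorProjection_mulVec]
  constructor
  · intro hmin
    have sqNorm_le_zero : sqNorm (F *ᵥ factorCoeff c F y - F *ᵥ γhat) ≤ 0 :=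
      (hmin (factorCoeff c F y)).trans_eq (sqNorm_eq_zero.mpr (sub_self _))
    have fit_eq : F *ᵥ factorCoeff c F y = F *ᵥ γhat :=
      sub_eq_zero.mp (sqNorm_eq_zero.mp (sqNorm_le_zero.antisymm (sqNorm_nonneg _)))
    exact (mulVec_injective_of_transpose_mul_self hc hF fit_eq).symm
  · rintro rfl γ
    rw [sub_self, sqNorm_eq_zero.mpr rfl]
    exact sqNorm_nonneg _

variable [DecidableEq ι]

theorem transpose_mul_one_sub_factorProjection (hc : c ≠ 0) (hF : Fᵀ * F = c • 1) :
    Fᵀ * (1 - factorProjection c F) = 0 := by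
  rw [factorProjection, Matrix.mul_sub, Matrix.mul_one, Matrix.mul_smul, ← Matrix.mul_assoc, hF,
    Matrix.smul_mul, Matrix.one_mul, inv_smul_smul₀ hc, sub_self]

theorem one_sub_factorProjection_mulVec_dotProduct_mulVec (hc : c ≠ 0) (hF : Fᵀ * F = c • 1)
    (v : ι → 𝕜) (γ : κ → 𝕜) : ((1 - factorProjection c F) *ᵥ v) ⬝ᵥ (F *ᵥ γ) = 0 := by
  rw [dotProduct_mulVec, ← mulVec_transpose, mulVec_mulVec,
    transpose_mul_one_sub_factorProjection hc hF, zero_mulVec, zero_dotProduct]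

theorem sqNorm_residual_eq_add (hc : c ≠ 0) (hF : Fᵀ * F = c • 1) (X : Matrix ι π 𝕜) (y : ι → 𝕜)
    (β : π → 𝕜) (γ : κ → 𝕜) :
    sqNorm (y - ((1 - factorProjection c F) * X) *ᵥ β - F *ᵥ γ) =
      sqNorm ((1 - factorProjection c F) *ᵥ y - ((1 - factorProjection c F) * X) *ᵥ β) +
        sqNorm (factorProjection c F *ᵥ y - F *ᵥ γ) := by
  set P := factorProjection c F
  have residual_split : y - ((1 - P) * X) *ᵥ β - F *ᵥ γ =
      ((1 - P) *ᵥ y - ((1 - P) * X) *ᵥ β) + (P *ᵥ y - F *ᵥ γ) := by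
    rw [sub_mulVec 1 P y, one_mulVec]
    abel
  have orthogonal : ((1 - P) *ᵥ y - ((1 - P) * X) *ᵥ β) ⬝ᵥ (P *ᵥ y - F *ᵥ γ) = 0 := by
    rw [← mulVec_mulVec, ← mulVec_sub, factorProjection_mulVec, ← mulVec_sub]
    exact one_sub_factorProjection_mulVec_dotProduct_mulVec hc hF _ _
  rw [residual_split, sqNorm_add_of_dotProduct_eq_zero orthogonal]

theorem penalized_estimation_profiling_general [LinearOrder 𝕜] [IsStrictOrderedRing 𝕜]
    (hc : c ≠ 0) (hF : Fᵀ * F = c • 1) (X : Matrix ι π 𝕜) (y : ι → 𝕜)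
    {w : 𝕜} (hw : 0 < w) (pen : (π → 𝕜) → 𝕜)
    {P : Matrix ι ι 𝕜} (hP : P = factorProjection c F)
    {U : Matrix ι π 𝕜} (hU : U = (1 - P) * X) :
    Fᵀ * U = 0 ∧
    (∀ β γ, w * sqNorm (y - U *ᵥ β - F *ᵥ γ) =
      w * sqNorm ((1 - P) *ᵥ y - U *ᵥ β) + w * sqNorm (P *ᵥ y - F *ᵥ γ)) ∧
    ∀ βhat γhat,
      (∀ β γ, w * sqNorm (y - U *ᵥ βhat - F *ᵥ γhat) + pen βhat ≤
        w * sqNorm (y - U *ᵥ β - F *ᵥ γ) + pen β) ↔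
      γhat = factorCoeff c F y ∧
        ∀ β, w * sqNorm ((1 - P) *ᵥ y - U *ᵥ βhat) + pen βhat ≤
          w * sqNorm ((1 - P) *ᵥ y - U *ᵥ β) + pen β := by
  subst hP hU
  have loss_split := fun β γ => congrArg (w * ·) (sqNorm_residual_eq_add hc hF X y β γ)
  simp only [mul_add] at loss_split
  refine ⟨?_, loss_split, fun βhat γhat => ?_⟩
  · rw [← Matrix.mul_assoc, transpose_mul_one_sub_factorProjection hc hF, Matrix.zero_mul]
  · simp only [loss_split, add_right_comm _ _ (pen _)]
    rw [← forall_mul_sqNorm_factorProjection_sub_le_iff hc hF hw y γhat, and_comm]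
    exact forall_add_le_add_iff
      (f := fun β => w * sqNorm ((1 - factorProjection c F) *ᵥ y -
        ((1 - factorProjection c F) * X) *ᵥ β) + pen β)
      (g := fun γ => w * sqNorm (factorProjection c F *ᵥ y - F *ᵥ γ))

end FactorProjection

/-- Equivalence of the joint ℓ1-penalized estimation problem and the profiled
problems: with `F̂ᵀF̂ = n I_K`, `P̂ = (1/n) F̂ F̂ᵀ`, `Û = (I − P̂) X`,
(i) `F̂ᵀÛ = 0`; (ii) the quadratic loss decomposes orthogonally; and
(iii) `(β̂, γ̂)` globally minimizes the joint objective iff `γ̂ = (1/n) F̂ᵀ y`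
and `β̂` globally minimizes the profiled objective. -/
theorem penalized_estimation_profiling
    {n p K : ℕ} (hn : 0 < n)
    (Fh : Matrix (Fin n) (Fin K) ℝ) (hF : Fhᵀ * Fh = (n : ℝ) • 1)
    (X : Matrix (Fin n) (Fin p) ℝ) (y : Fin n → ℝ)
    (lam : ℝ) (hlam : 0 < lam)
    (Ph : Matrix (Fin n) (Fin n) ℝ) (hPh : Ph = (n : ℝ)⁻¹ • (Fh * Fhᵀ))
    (Uh : Matrix (Fin n) (Fin p) ℝ) (hUh : Uh = (1 - Ph) * X) :
    (Fhᵀ * Uh = 0) ∧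
    (∀ (β : Fin p → ℝ) (γ : Fin K → ℝ),
      (1 / (2 * (n : ℝ))) * ∑ i, (y i - (Uh *ᵥ β) i - (Fh *ᵥ γ) i) ^ 2
        = (1 / (2 * (n : ℝ))) * ∑ i, (((1 - Ph) *ᵥ y) i - (Uh *ᵥ β) i) ^ 2
          + (1 / (2 * (n : ℝ))) * ∑ i, ((Ph *ᵥ y) i - (Fh *ᵥ γ) i) ^ 2) ∧
    (∀ (βhat : Fin p → ℝ) (γhat : Fin K → ℝ),
      (∀ (β : Fin p → ℝ) (γ : Fin K → ℝ),
        (1 / (2 * (n : ℝ))) * ∑ i, (y i - (Uh *ᵥ βhat) i - (Fh *ᵥ γhat) i) ^ 2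
            + lam * ∑ j, |βhat j|
          ≤ (1 / (2 * (n : ℝ))) * ∑ i, (y i - (Uh *ᵥ β) i - (Fh *ᵥ γ) i) ^ 2
            + lam * ∑ j, |β j|)
      ↔ (γhat = (n : ℝ)⁻¹ • (Fhᵀ *ᵥ y) ∧
          ∀ β : Fin p → ℝ,
            (1 / (2 * (n : ℝ))) * ∑ i, (((1 - Ph) *ᵥ y) i - (Uh *ᵥ βhat) i) ^ 2
                + lam * ∑ j, |βhat j|
              ≤ (1 / (2 * (n : ℝ))) * ∑ i, (((1 - Ph) *ᵥ y) i - (Uh *ᵥ β) i) ^ 2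
                + lam * ∑ j, |β j|)) := by
  exact penalized_estimation_profiling_general (Nat.cast_ne_zero.mpr hn.ne') hF X y (by positivity)
    (fun β => lam * ∑ j, |β j|) hPh hUh
end

section
/- Let U ∈ ℝ^{n×p}, β* ∈ ℝ^p, w ∈ ℝⁿ, y = Uβ* + w, and λ > 0. Let S ⊆ {1, …, p} contain the support of β*, with |S| = s, and let β̂ ∈ ℝ^p and θ = β̂ − β*. Suppose there exists κ ∈ ℝ^p with ‖κ‖_∞ ≤ 1, ⟨κ, β̂⟩ = ‖β̂‖₁, and (1/n)Uᵀ(Uβ̂ − y) + λκ = 0 (the KKT condition), and suppose λ ≥ 2‖(1/n)Uᵀw‖_∞. Then: (i) (1/n)‖Uθ‖₂² ≤ (3/2) λ √s ‖θ‖₂, and (ii) the cone condition ‖θ_{S^c}‖₁ ≤ 3‖θ_S‖₁ holds. -/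
open Matrix BigOperators Finset

/-!
Pairing the KKT condition with `θ = β̂ - β*` gives
`(1/n)‖Uθ‖₂² = ⟨(1/n)Uᵀw, θ⟩ + λ⟨κ, β* - β̂⟩`. Hölder's inequality bounds the first term by
`(λ/2)‖θ‖₁`. As `κ` is a subgradient of `‖·‖₁` at `β̂`, the second is at most
`λ(‖β*‖₁ - ‖β̂‖₁) ≤ λ(‖θ_S‖₁ - ‖θ_{Sᶜ}‖₁)`. Hence
`0 ≤ (1/n)‖Uθ‖₂² ≤ (3λ/2)‖θ_S‖₁ - (λ/2)‖θ_{Sᶜ}‖₁`, which yields the cone condition and, by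
Cauchy–Schwarz on `S`, the upper bound.
-/

theorem sum_abs_le_sqrt_card_mul_sqrt_sum_sq {ι : Type*} (S : Finset ι) (x : ι → ℝ) :
    ∑ j ∈ S, |x j| ≤ √(#S : ℝ) * √(∑ j ∈ S, x j ^ 2) := by
  simpa using Real.sum_mul_le_sqrt_mul_sqrt S (fun _ => 1) (fun j => |x j|)

theorem sum_abs_sub_sum_abs_le_of_eq_zero_of_notMem {ι G : Type*} [Fintype ι] [DecidableEq ι]
    [AddCommGroup G] [LinearOrder G] [IsOrderedAddMonoid G] {S : Finset ι} {z : ι → G}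
    (hz : ∀ j ∉ S, z j = 0) (x : ι → G) :
    ∑ j, |z j| - ∑ j, |x j| ≤ ∑ j ∈ S, |(x - z) j| - ∑ j ∈ Sᶜ, |(x - z) j| := by
  have on_support : ∑ j ∈ S, |z j| - ∑ j ∈ S, |x j| ≤ ∑ j ∈ S, |(x - z) j| := by
    rw [← sum_sub_distrib]
    refine sum_le_sum fun j _ => ?_
    rw [Pi.sub_apply, abs_sub_comm]
    exact abs_sub_abs_le_abs_sub _ _
  have z_off_support : ∑ j ∈ Sᶜ, |z j| = 0 :=
    sum_eq_zero fun j hj => by rw [hz j (mem_compl.mp hj), abs_zero]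
  have diff_off_support : ∑ j ∈ Sᶜ, |(x - z) j| = ∑ j ∈ Sᶜ, |x j| :=
    sum_congr rfl fun j hj => by rw [Pi.sub_apply, hz j (mem_compl.mp hj), sub_zero]
  calc ∑ j, |z j| - ∑ j, |x j|
      = (∑ j ∈ S, |z j| - ∑ j ∈ S, |x j|) - ∑ j ∈ Sᶜ, |x j| := by
        rw [← sum_add_sum_compl S fun j => |z j|, ← sum_add_sum_compl S fun j => |x j|,
          z_off_support, add_zero, sub_sub]
    _ ≤ ∑ j ∈ S, |(x - z) j| - ∑ j ∈ Sᶜ, |(x - z) j| := by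
        rw [diff_off_support]
        exact sub_le_sub_right on_support _

section OrderedRing

variable {ι R : Type*} [Fintype ι] [Ring R] [LinearOrder R] [IsOrderedRing R]

theorem dotProduct_le_mul_sum_abs {a : ι → R} {c : R} (ha : ∀ j, |a j| ≤ c) (x : ι → R) :
    a ⬝ᵥ x ≤ c * ∑ j, |x j| := by
  rw [dotProduct, mul_sum]
  refine sum_le_sum fun j _ => ?_
  calc a j * x j ≤ |a j| * |x j| := (le_abs_self _).trans_eq (abs_mul _ _)
    _ ≤ c * |x j| := mul_le_mul_of_nonneg_right (ha j) (abs_nonneg _)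

theorem dotProduct_sub_le_sum_abs_sub_sum_abs {κ x : ι → R} (hκ : ∀ j, |κ j| ≤ 1)
    (hκx : κ ⬝ᵥ x = ∑ j, |x j|) (z : ι → R) :
    κ ⬝ᵥ (z - x) ≤ ∑ j, |z j| - ∑ j, |x j| := by
  rw [dotProduct_sub, hκx]
  simpa using dotProduct_le_mul_sum_abs hκ z

end OrderedRing

section Lasso

variable {m ι R : Type*} [Fintype m] [Fintype ι] [CommRing R]
  {U : Matrix m ι R} {βstar βhat κ : ι → R} {w : m → R} {c lam : R}

theorem mul_sum_sq_mulVec_sub_eq_of_kkt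
    (hKKT : c • (Uᵀ *ᵥ (U *ᵥ βhat - (U *ᵥ βstar + w))) + lam • κ = 0) :
    c * ∑ i, (U *ᵥ (βhat - βstar)) i ^ 2
      = (c • (Uᵀ *ᵥ w)) ⬝ᵥ (βhat - βstar) + lam * (κ ⬝ᵥ (βstar - βhat)) := by
  set θ := βhat - βstar with hθ
  have residual : U *ᵥ βhat - (U *ᵥ βstar + w) = U *ᵥ θ - w := by
    rw [hθ, mulVec_sub, sub_sub]
  have gradient : c • (Uᵀ *ᵥ (U *ᵥ θ)) = c • (Uᵀ *ᵥ w) - lam • κ := by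
    rw [residual, mulVec_sub, smul_sub] at hKKT
    linear_combination hKKT
  calc c * ∑ i, (U *ᵥ θ) i ^ 2
      = (c • (Uᵀ *ᵥ (U *ᵥ θ))) ⬝ᵥ θ := by
        rw [smul_dotProduct, smul_eq_mul, dotProduct_comm, dotProduct_transpose_mulVec]
        simp only [dotProduct, sq]
    _ = (c • (Uᵀ *ᵥ w)) ⬝ᵥ θ + lam * (κ ⬝ᵥ (βstar - βhat)) := by
        rw [gradient, sub_dotProduct, smul_dotProduct lam, smul_eq_mul, ← neg_sub βhat βstar,
          dotProduct_neg, mul_neg, sub_eq_add_neg]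

theorem mul_sum_sq_mulVec_sub_le_of_kkt [LinearOrder R] [IsOrderedRing R] [DecidableEq ι]
    {S : Finset ι} {μ : R}
    (hKKT : c • (Uᵀ *ᵥ (U *ᵥ βhat - (U *ᵥ βstar + w))) + lam • κ = 0)
    (hlam : 0 ≤ lam) (hκ : ∀ j, |κ j| ≤ 1) (hκβ : κ ⬝ᵥ βhat = ∑ j, |βhat j|)
    (hsupp : ∀ j ∉ S, βstar j = 0) (hnoise : ∀ j, |(c • (Uᵀ *ᵥ w)) j| ≤ μ) :
    c * ∑ i, (U *ᵥ (βhat - βstar)) i ^ 2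
      ≤ (lam + μ) * ∑ j ∈ S, |(βhat - βstar) j|
        - (lam - μ) * ∑ j ∈ Sᶜ, |(βhat - βstar) j| := by
  set θ := βhat - βstar
  have noise_le : (c • (Uᵀ *ᵥ w)) ⬝ᵥ θ ≤ μ * (∑ j ∈ S, |θ j| + ∑ j ∈ Sᶜ, |θ j|) := by
    rw [sum_add_sum_compl]
    exact dotProduct_le_mul_sum_abs hnoise θ
  have penalty_le : κ ⬝ᵥ (βstar - βhat) ≤ ∑ j ∈ S, |θ j| - ∑ j ∈ Sᶜ, |θ j| :=
    (dotProduct_sub_le_sum_abs_sub_sum_abs hκ hκβ βstar).trans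
      (sum_abs_sub_sum_abs_le_of_eq_zero_of_notMem hsupp βhat)
  calc c * ∑ i, (U *ᵥ θ) i ^ 2
      = (c • (Uᵀ *ᵥ w)) ⬝ᵥ θ + lam * (κ ⬝ᵥ (βstar - βhat)) := mul_sum_sq_mulVec_sub_eq_of_kkt hKKT
    _ ≤ μ * (∑ j ∈ S, |θ j| + ∑ j ∈ Sᶜ, |θ j|) + lam * (∑ j ∈ S, |θ j| - ∑ j ∈ Sᶜ, |θ j|) :=
        add_le_add noise_le (mul_le_mul_of_nonneg_left penalty_le hlam)
    _ = (lam + μ) * ∑ j ∈ S, |θ j| - (lam - μ) * ∑ j ∈ Sᶜ, |θ j| := by ring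

end Lasso

/-- Deterministic upper bound and cone condition in the proof of Theorem 4:
under the KKT condition and `λ ≥ 2‖(1/n)Uᵀw‖_∞`, one has
`(1/n)‖Uθ‖₂² ≤ (3/2) λ √s ‖θ‖₂` and `‖θ_{Sᶜ}‖₁ ≤ 3‖θ_S‖₁`. -/
theorem lasso_upper_bound_and_cone
    {n p : ℕ} (U : Matrix (Fin n) (Fin p) ℝ)
    (βstar : Fin p → ℝ) (w : Fin n → ℝ) (y : Fin n → ℝ)
    (hy : y = U *ᵥ βstar + w)
    (lam : ℝ) (hlam : 0 < lam)
    (S : Finset (Fin p)) (hsupp : ∀ j ∉ S, βstar j = 0)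
    (s : ℕ) (hs : s = S.card)
    (βhat : Fin p → ℝ) (θ : Fin p → ℝ) (hθ : θ = βhat - βstar)
    (κ : Fin p → ℝ) (hκ_sub : ∀ j, |κ j| ≤ 1)
    (hκ_dot : κ ⬝ᵥ βhat = ∑ j, |βhat j|)
    (hKKT : (n : ℝ)⁻¹ • (Uᵀ *ᵥ (U *ᵥ βhat - y)) + lam • κ = 0)
    (hlam_ge : 2 * (⨆ j, |(n : ℝ)⁻¹ * (Uᵀ *ᵥ w) j|) ≤ lam) :
    ((n : ℝ)⁻¹ * ∑ i, ((U *ᵥ θ) i) ^ 2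
      ≤ (3 / 2) * lam * Real.sqrt s * Real.sqrt (∑ j, (θ j) ^ 2)) ∧
    (∑ j ∈ Sᶜ, |θ j|) ≤ 3 * ∑ j ∈ S, |θ j| := by
  subst hy hs hθ
  set θ := βhat - βstar
  have noise_le (j : Fin p) : |((n : ℝ)⁻¹ • (Uᵀ *ᵥ w)) j| ≤ lam / 2 :=
    (le_ciSup (Set.finite_range fun j => |(n : ℝ)⁻¹ * (Uᵀ *ᵥ w) j|).bddAbove j).trans
      (by linarith)
  have basic_inequality : (n : ℝ)⁻¹ * ∑ i, (U *ᵥ θ) i ^ 2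
      ≤ (lam + lam / 2) * ∑ j ∈ S, |θ j| - (lam - lam / 2) * ∑ j ∈ Sᶜ, |θ j| :=
    mul_sum_sq_mulVec_sub_le_of_kkt hKKT hlam.le hκ_sub hκ_dot hsupp noise_le
  have loss_nonneg : 0 ≤ (n : ℝ)⁻¹ * ∑ i, (U *ᵥ θ) i ^ 2 := by positivity
  have off_support_nonneg : 0 ≤ lam * ∑ j ∈ Sᶜ, |θ j| := by positivity
  have l1_le_l2 : ∑ j ∈ S, |θ j| ≤ √(#S : ℝ) * √(∑ j, θ j ^ 2) :=
    (sum_abs_le_sqrt_card_mul_sqrt_sum_sq S θ).trans <| by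
      gcongr
      exact S.subset_univ
  constructor
  · calc (n : ℝ)⁻¹ * ∑ i, (U *ᵥ θ) i ^ 2 ≤ 3 / 2 * lam * ∑ j ∈ S, |θ j| := by linarith
      _ ≤ 3 / 2 * lam * (√(#S : ℝ) * √(∑ j, θ j ^ 2)) := by gcongr
      _ = 3 / 2 * lam * √(#S : ℝ) * √(∑ j, θ j ^ 2) := (mul_assoc _ _ _).symm
  · exact le_of_mul_le_mul_left (by linarith) hlam
end

section
/- Let Û ∈ ℝ^{n×p}, β*, β̂ ∈ ℝ^p, w ∈ ℝⁿ, y = Ûβ* + w, Θ̂ ∈ ℝ^{p×p}, β̃ = β̂ + (1/n) Θ̂ Ûᵀ(y − Ûβ̂), and Σ̂ = (1/n) ÛᵀÛ. Then ‖β̃ − β* − (1/n) Θ̂ Ûᵀ w‖_∞ ≤ ‖Θ̂ Σ̂ − I_p‖_max · ‖β̂ − β*‖₁. In particular, if ‖Θ̂ Σ̂ − I_p‖_max ≤ δ, then ‖√n(β̃ − β*) − n^{-1/2} Θ̂ Ûᵀ w‖_∞ ≤ √n · δ · ‖β̂ − β*‖₁. -/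
open Matrix BigOperators

section EntrywiseBounds

variable {R ι κ : Type*}

theorem norm_entry_le_iSup_iSup_norm [Norm R] [Finite ι] [Finite κ] (A : Matrix ι κ R)
    (i : ι) (k : κ) : ‖A i k‖ ≤ ⨆ i, ⨆ k, ‖A i k‖ :=
  calc
    ‖A i k‖ ≤ ⨆ k, ‖A i k‖ := le_ciSup (f := fun k => ‖A i k‖) (Finite.bddAbove_range _) k
    _ ≤ ⨆ i, ⨆ k, ‖A i k‖ := le_ciSup (f := fun i => ⨆ k, ‖A i k‖) (Finite.bddAbove_range _) i

variable [NonUnitalSeminormedRing R]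

theorem norm_dotProduct_le_mul_sum_norm [Fintype κ] {u : κ → R} {C : ℝ}
    (hu : ∀ k, ‖u k‖ ≤ C) (v : κ → R) : ‖u ⬝ᵥ v‖ ≤ C * ∑ k, ‖v k‖ :=
  calc
    ‖u ⬝ᵥ v‖ ≤ ∑ k, ‖u k * v k‖ := norm_sum_le _ _
    _ ≤ ∑ k, C * ‖v k‖ := by
      gcongr with k
      exact norm_mul_le_of_le (hu k) le_rfl
    _ = C * ∑ k, ‖v k‖ := (Finset.mul_sum ..).symm

theorem norm_mulVec_apply_le [Finite ι] [Fintype κ] (A : Matrix ι κ R) (v : κ → R) (i : ι) :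
    ‖(A *ᵥ v) i‖ ≤ (⨆ i, ⨆ k, ‖A i k‖) * ∑ k, ‖v k‖ :=
  norm_dotProduct_le_mul_sum_norm (norm_entry_le_iSup_iSup_norm A i) v

end EntrywiseBounds

section Debiasing

variable {m ι : Type*} [Fintype m] [Fintype ι] [DecidableEq ι]

theorem debiased_sub_sub_eq_mulVec {R : Type*} [CommRing R] (U : Matrix m ι R)
    (V : Matrix ι m R) (Θ : Matrix ι ι R) (c : R) (βstar βhat : ι → R) (w : m → R) :
    βhat + c • (Θ *ᵥ (V *ᵥ (U *ᵥ βstar + w - U *ᵥ βhat))) - βstar - c • (Θ *ᵥ (V *ᵥ w)) =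
      (Θ * (c • (V * U)) - 1) *ᵥ (βstar - βhat) := by
  have residual : U *ᵥ βstar + w - U *ᵥ βhat = U *ᵥ (βstar - βhat) + w := by
    rw [mulVec_sub]
    abel
  have gram : (Θ * (c • (V * U))) *ᵥ (βstar - βhat) =
      c • (Θ *ᵥ (V *ᵥ (U *ᵥ (βstar - βhat)))) := by
    simp only [Matrix.mul_smul, smul_mulVec, mulVec_mulVec]
  rw [residual, sub_mulVec, one_mulVec, gram, mulVec_add, mulVec_add, smul_add]
  abel

-- `V` takes the place of `Uᵀ`, `c` that of the weight `1 / n`, and `s` that of the rate `√n`.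
theorem debiased_remainder_bound_general {R : Type*} [SeminormedCommRing R]
    (U : Matrix m ι R) (V : Matrix ι m R) (c s : R) (βstar βhat : ι → R) (w y : m → R)
    (hy : y = U *ᵥ βstar + w) (Θ : Matrix ι ι R) (βtil : ι → R)
    (hβtil : βtil = βhat + c • (Θ *ᵥ (V *ᵥ (y - U *ᵥ βhat))))
    (S : Matrix ι ι R) (hS : S = c • (V * U)) :
    ((⨆ j, ‖(βtil - βstar - c • (Θ *ᵥ (V *ᵥ w))) j‖)
      ≤ (⨆ j, ⨆ k, ‖(Θ * S - 1) j k‖) * ∑ j, ‖βhat j - βstar j‖) ∧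
    ∀ δ : ℝ, (⨆ j, ⨆ k, ‖(Θ * S - 1) j k‖) ≤ δ →
      (⨆ j, ‖s * (βtil j - βstar j) - s * c * (Θ *ᵥ (V *ᵥ w)) j‖)
        ≤ ‖s‖ * δ * ∑ j, ‖βhat j - βstar j‖ := by
  have max_nonneg : 0 ≤ ⨆ j, ⨆ k, ‖(Θ * S - 1) j k‖ :=
    Real.iSup_nonneg fun _ => Real.iSup_nonneg fun _ => norm_nonneg _
  have remainder_le (j : ι) : ‖(βtil - βstar - c • (Θ *ᵥ (V *ᵥ w))) j‖ ≤
      (⨆ j, ⨆ k, ‖(Θ * S - 1) j k‖) * ∑ j, ‖βhat j - βstar j‖ := by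
    subst hy hβtil hS
    simp only [debiased_sub_sub_eq_mulVec, norm_sub_rev (βhat _)]
    exact norm_mulVec_apply_le _ _ j
  refine ⟨Real.iSup_le remainder_le (by positivity), fun δ hδ => ?_⟩
  have δ_nonneg : 0 ≤ δ := max_nonneg.trans hδ
  refine Real.iSup_le (fun j => ?_) (by positivity)
  calc
    ‖s * (βtil j - βstar j) - s * c * (Θ *ᵥ (V *ᵥ w)) j‖
        = ‖s * (βtil - βstar - c • (Θ *ᵥ (V *ᵥ w))) j‖ := by
      simp only [Pi.sub_apply, Pi.smul_apply, smul_eq_mul, mul_sub, mul_assoc]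
    _ ≤ ‖s‖ * ‖(βtil - βstar - c • (Θ *ᵥ (V *ᵥ w))) j‖ := norm_mul_le _ _
    _ ≤ ‖s‖ * (δ * ∑ j, ‖βhat j - βstar j‖) := by
      gcongr
      exact (remainder_le j).trans (by gcongr)
    _ = ‖s‖ * δ * ∑ j, ‖βhat j - βstar j‖ := (mul_assoc ..).symm

end Debiasing

/-- Control of the remainder in the debiased decomposition:
`‖β̃ − β* − (1/n)Θ̂Ûᵀw‖_∞ ≤ ‖Θ̂Σ̂ − I‖_max ‖β̂ − β*‖₁`, and under the CLIME
feasibility constraint `‖Θ̂Σ̂ − I‖_max ≤ δ`,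
`‖√n(β̃ − β*) − n^{-1/2}Θ̂Ûᵀw‖_∞ ≤ √n δ ‖β̂ − β*‖₁`. -/
theorem debiased_remainder_bound
    {n p : ℕ} (Uh : Matrix (Fin n) (Fin p) ℝ)
    (βstar βhat : Fin p → ℝ) (w : Fin n → ℝ) (y : Fin n → ℝ)
    (hy : y = Uh *ᵥ βstar + w)
    (Θh : Matrix (Fin p) (Fin p) ℝ)
    (βtil : Fin p → ℝ)
    (hβtil : βtil = βhat + (n : ℝ)⁻¹ • (Θh *ᵥ (Uhᵀ *ᵥ (y - Uh *ᵥ βhat))))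
    (Sigh : Matrix (Fin p) (Fin p) ℝ) (hSig : Sigh = (n : ℝ)⁻¹ • (Uhᵀ * Uh)) :
    ((⨆ j, |(βtil - βstar - (n : ℝ)⁻¹ • (Θh *ᵥ (Uhᵀ *ᵥ w))) j|)
      ≤ (⨆ j, ⨆ k, |(Θh * Sigh - 1) j k|) * ∑ j, |βhat j - βstar j|) ∧
    ∀ δ : ℝ, (⨆ j, ⨆ k, |(Θh * Sigh - 1) j k|) ≤ δ →
      (⨆ j, |Real.sqrt n * (βtil j - βstar j)
              - (Real.sqrt n)⁻¹ * (Θh *ᵥ (Uhᵀ *ᵥ w)) j|)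
        ≤ Real.sqrt n * δ * ∑ j, |βhat j - βstar j| := by
  have sqrt_mul_inv : √(n : ℝ) * (n : ℝ)⁻¹ = (√n)⁻¹ := Real.sqrt_div_self
  simpa only [Real.norm_eq_abs, abs_of_nonneg (Real.sqrt_nonneg _), sqrt_mul_inv] using
    debiased_remainder_bound_general Uh Uhᵀ (n : ℝ)⁻¹ √n βstar βhat w y hy Θh βtil hβtil Sigh hSig
end

section
/- Let A, Θ*, Σ, Σ̂ ∈ ℝ^{p×p} with Σ Θ* = I_p. Then A − Θ* = (A Σ − I_p) Θ*, and consequently ‖A − Θ*‖_max ≤ ‖Θ*‖₁ · ( ‖A Σ̂ − I_p‖_max + ‖A‖_∞ · ‖Σ̂ − Σ‖_max ). In particular, if A satisfies the feasibility constraint ‖A Σ̂ − I_p‖_max ≤ δ, then ‖A − Θ*‖_max ≤ ‖Θ*‖₁ (δ + ‖A‖_∞ ‖Σ̂ − Σ‖_max). -/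
open Matrix BigOperators

section MatrixNorms

variable {m n l α R : Type*}

/-- The element-wise max-norm `‖M‖_max = max_{j,k} ‖M j k‖`, used for matrices with finite index
types. The supremum is taken in `ℝ`, so an empty matrix has norm `0`. -/
noncomputable def maxNorm [Norm α] (M : Matrix m n α) : ℝ :=
  ⨆ j, ⨆ k, ‖M j k‖

/-- The maximum absolute row sum `‖M‖_∞ = max_j ∑_k ‖M j k‖`, for a finite row index type; it is
`0` when there are no rows. -/
noncomputable def rowSumNorm [Fintype n] [Norm α] (M : Matrix m n α) : ℝ :=
  ⨆ j, ∑ k, ‖M j k‖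

/-- The maximum absolute column sum `‖M‖₁ = max_k ∑_j ‖M j k‖`, for a finite column index type; it
is `0` when there are no columns. -/
noncomputable def colSumNorm [Fintype m] [Norm α] (M : Matrix m n α) : ℝ :=
  ⨆ k, ∑ j, ‖M j k‖

section SeminormedAddGroup

variable [SeminormedAddGroup α]

lemma maxNorm_nonneg (M : Matrix m n α) : 0 ≤ maxNorm M :=
  Real.iSup_nonneg fun _ => Real.iSup_nonneg fun _ => norm_nonneg _

lemma rowSumNorm_nonneg [Fintype n] (M : Matrix m n α) : 0 ≤ rowSumNorm M :=
  Real.iSup_nonneg fun _ => Finset.sum_nonneg fun _ _ => norm_nonneg _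

lemma colSumNorm_nonneg [Fintype m] (M : Matrix m n α) : 0 ≤ colSumNorm M :=
  Real.iSup_nonneg fun _ => Finset.sum_nonneg fun _ _ => norm_nonneg _

lemma maxNorm_le {M : Matrix m n α} {c : ℝ} (hc : 0 ≤ c) (h : ∀ j k, ‖M j k‖ ≤ c) :
    maxNorm M ≤ c :=
  Real.iSup_le (fun j => Real.iSup_le (h j) hc) hc

end SeminormedAddGroup

lemma norm_apply_le_maxNorm [Finite m] [Finite n] [Norm α] (M : Matrix m n α) (j : m) (k : n) :
    ‖M j k‖ ≤ maxNorm M :=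
  (le_ciSup (f := fun k => ‖M j k‖) (Set.finite_range _).bddAbove k).trans
    (le_ciSup (f := fun j => ⨆ k, ‖M j k‖) (Set.finite_range _).bddAbove j)

lemma sum_norm_row_le_rowSumNorm [Finite m] [Fintype n] [Norm α] (M : Matrix m n α) (j : m) :
    ∑ k, ‖M j k‖ ≤ rowSumNorm M :=
  le_ciSup (f := fun j => ∑ k, ‖M j k‖) (Set.finite_range _).bddAbove j

lemma sum_norm_col_le_colSumNorm [Fintype m] [Finite n] [Norm α] (M : Matrix m n α) (k : n) :
    ∑ j, ‖M j k‖ ≤ colSumNorm M :=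
  le_ciSup (f := fun k => ∑ j, ‖M j k‖) (Set.finite_range _).bddAbove k

lemma maxNorm_sub_le [Finite m] [Finite n] [SeminormedAddGroup α] (M N : Matrix m n α) :
    maxNorm (M - N) ≤ maxNorm M + maxNorm N :=
  maxNorm_le (add_nonneg (maxNorm_nonneg M) (maxNorm_nonneg N)) fun j k =>
    (norm_sub_le (M j k) (N j k)).trans
      (add_le_add (norm_apply_le_maxNorm M j k) (norm_apply_le_maxNorm N j k))

section Mul

variable [Fintype n] [NonUnitalSeminormedRing R]

lemma norm_mul_apply_le_sum (M : Matrix m n R) (N : Matrix n l R) (i : m) (k : l) :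
    ‖(M * N) i k‖ ≤ ∑ j, ‖M i j‖ * ‖N j k‖ :=
  norm_sum_le_of_le _ fun _ _ => norm_mul_le _ _

variable [Finite m] [Finite l]

lemma maxNorm_mul_le_rowSumNorm_mul_maxNorm (M : Matrix m n R) (N : Matrix n l R) :
    maxNorm (M * N) ≤ rowSumNorm M * maxNorm N := by
  refine maxNorm_le (mul_nonneg (rowSumNorm_nonneg M) (maxNorm_nonneg N)) fun i k => ?_
  calc ‖(M * N) i k‖
      ≤ ∑ j, ‖M i j‖ * ‖N j k‖ := norm_mul_apply_le_sum M N i k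
    _ ≤ ∑ j, ‖M i j‖ * maxNorm N := by
        gcongr with j
        exact norm_apply_le_maxNorm N j k
    _ = (∑ j, ‖M i j‖) * maxNorm N := (Finset.sum_mul ..).symm
    _ ≤ rowSumNorm M * maxNorm N :=
        mul_le_mul_of_nonneg_right (sum_norm_row_le_rowSumNorm M i) (maxNorm_nonneg N)

lemma maxNorm_mul_le_maxNorm_mul_colSumNorm (M : Matrix m n R) (N : Matrix n l R) :
    maxNorm (M * N) ≤ maxNorm M * colSumNorm N := by
  refine maxNorm_le (mul_nonneg (maxNorm_nonneg M) (colSumNorm_nonneg N)) fun i k => ?_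
  calc ‖(M * N) i k‖
      ≤ ∑ j, ‖M i j‖ * ‖N j k‖ := norm_mul_apply_le_sum M N i k
    _ ≤ ∑ j, maxNorm M * ‖N j k‖ := by
        gcongr with j
        exact norm_apply_le_maxNorm M i j
    _ = maxNorm M * ∑ j, ‖N j k‖ := (Finset.mul_sum ..).symm
    _ ≤ maxNorm M * colSumNorm N :=
        mul_le_mul_of_nonneg_left (sum_norm_col_le_colSumNorm N k) (maxNorm_nonneg M)

lemma maxNorm_mul_sub_le_add_rowSumNorm_mul (A : Matrix m n R) (S T : Matrix n l R)
    (B : Matrix m l R) :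
    maxNorm (A * S - B) ≤ maxNorm (A * T - B) + rowSumNorm A * maxNorm (T - S) := by
  have decomposition : A * S - B = (A * T - B) - A * (T - S) := by
    rw [Matrix.mul_sub]
    abel
  calc maxNorm (A * S - B)
      ≤ maxNorm (A * T - B) + maxNorm (A * (T - S)) := decomposition ▸ maxNorm_sub_le _ _
    _ ≤ maxNorm (A * T - B) + rowSumNorm A * maxNorm (T - S) := by
        gcongr
        exact maxNorm_mul_le_rowSumNorm_mul_maxNorm A (T - S)

end Mul

end MatrixNorms

section RightInverse

variable {m n R : Type*} [Fintype m] [Fintype n] [DecidableEq m] [DecidableEq n]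

lemma sub_eq_mul_sub_one_mul_of_mul_eq_one [Ring R] (A : Matrix m n R)
    {Θ : Matrix m n R} {S : Matrix n m R} (hΘ : S * Θ = 1) :
    A - Θ = (A * S - 1) * Θ := by
  rw [Matrix.sub_mul, Matrix.mul_assoc, hΘ, Matrix.mul_one, Matrix.one_mul]

theorem clime_error_bound_general [SeminormedRing R]
    (A Θstar : Matrix m n R) (Sig Sighat : Matrix n m R) (hΘ : Sig * Θstar = 1) :
    A - Θstar = (A * Sig - 1) * Θstar ∧
    maxNorm (A - Θstar) ≤ colSumNorm Θstar *
      (maxNorm (A * Sighat - 1) + rowSumNorm A * maxNorm (Sighat - Sig)) ∧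
    ∀ δ : ℝ, maxNorm (A * Sighat - 1) ≤ δ →
      maxNorm (A - Θstar) ≤ colSumNorm Θstar * (δ + rowSumNorm A * maxNorm (Sighat - Sig)) := by
  have factorization := sub_eq_mul_sub_one_mul_of_mul_eq_one A hΘ
  have feasible_bound : ∀ δ : ℝ, maxNorm (A * Sighat - 1) ≤ δ →
      maxNorm (A - Θstar) ≤
        colSumNorm Θstar * (δ + rowSumNorm A * maxNorm (Sighat - Sig)) := fun δ hδ =>
    calc maxNorm (A - Θstar)
        = maxNorm ((A * Sig - 1) * Θstar) := congrArg maxNorm factorization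
      _ ≤ maxNorm (A * Sig - 1) * colSumNorm Θstar := maxNorm_mul_le_maxNorm_mul_colSumNorm _ _
      _ = colSumNorm Θstar * maxNorm (A * Sig - 1) := mul_comm _ _
      _ ≤ colSumNorm Θstar * (δ + rowSumNorm A * maxNorm (Sighat - Sig)) :=
          mul_le_mul_of_nonneg_left
            ((maxNorm_mul_sub_le_add_rowSumNorm_mul A Sig Sighat 1).trans (add_le_add_left hδ _))
            (colSumNorm_nonneg Θstar)
  exact ⟨factorization, feasible_bound _ le_rfl, feasible_bound⟩

end RightInverse

/-- Deterministic matrix inequality behind the CLIME error bound: if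
`Σ Θ* = I`, then `A − Θ* = (AΣ − I)Θ*`, hence
`‖A − Θ*‖_max ≤ ‖Θ*‖₁ (‖AΣ̂ − I‖_max + ‖A‖_∞ ‖Σ̂ − Σ‖_max)`; in particular
this holds with `‖AΣ̂ − I‖_max` replaced by any feasibility level `δ`. -/
theorem clime_error_bound
    {p : ℕ} (A Θstar Sig Sighat : Matrix (Fin p) (Fin p) ℝ)
    (hΘ : Sig * Θstar = 1) :
    A - Θstar = (A * Sig - 1) * Θstar ∧
    ((⨆ j, ⨆ k, |(A - Θstar) j k|)
      ≤ (⨆ k, ∑ j, |Θstar j k|) *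
          ((⨆ j, ⨆ k, |(A * Sighat - 1) j k|)
            + (⨆ j, ∑ k, |A j k|) * (⨆ j, ⨆ k, |(Sighat - Sig) j k|))) ∧
    ∀ δ : ℝ, (⨆ j, ⨆ k, |(A * Sighat - 1) j k|) ≤ δ →
      (⨆ j, ⨆ k, |(A - Θstar) j k|)
        ≤ (⨆ k, ∑ j, |Θstar j k|) *
            (δ + (⨆ j, ∑ k, |A j k|) * (⨆ j, ⨆ k, |(Sighat - Sig) j k|)) :=
  clime_error_bound_general A Θstar Sig Sighat hΘ
end
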